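/- arXiv:2005.00729 — 3 statements merged into one kernel-verified Lean document; each statement's English description precedes it below -/
import Mathlib

section
/- Let T : V → g be a relative Rota-Baxter operator on a Leibniz algebra (g,[·,·]_g) with respect to a representation (V; ρL, ρR). Define ρ̄L, ρ̄R : V → End_K(g) by ρ̄L(u)x = [Tu,x]_g − T(ρR(x)u) and ρ̄R(u)x = [x,Tu]_g − T(ρL(x)u). Then (g; ρ̄L, ρ̄R) is a representation of the Leibniz algebra (V,[·,·]_T); that is, for all u,v ∈ V: ρ̄L([u,v]_T) = ρ̄L(u)∘ρ̄L(v) − ρ̄L(v)∘ρ̄L(u), ρ̄R([u,v]_T) = ρ̄L(u)∘ρ̄R(v) − ρ̄R(v)∘ρ̄L(u), and ρ̄R(u)∘ρ̄L(v) = −ρ̄R(u)∘ρ̄R(v). -/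
/-!
On `g × V` consider the semidirect product bracket `[(x, u), (y, v)] = ([x, y], ρL x v + ρR y u)`,
a Leibniz bracket. The graph of a relative Rota-Baxter operator `T` is closed under this bracket,
and `u ↦ (T u, u)` identifies it with `(V, [·,·]_T)`. A Leibniz algebra is a representation of any
subalgebra, acting from both sides by the bracket, and so is its quotient by that subalgebra. Here
the quotient is `g`, with projection `(x, u) ↦ x - T u`, and the quotient actions evaluated on the
representative `(x, 0)` of `x` are `[T u, x] - T (ρR x u)` and `[x, T u] - T (ρL x u)`.
-/

section Representation

variable {R A B M N : Type*} [CommRing R] [AddCommGroup A] [Module R A] [AddCommGroup B]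
  [Module R B] [AddCommGroup M] [Module R M] [AddCommGroup N] [Module R N]

/-- The left Leibniz identity for a bilinear bracket. Brackets are explicit bilinear maps rather
than instances because `V` carries a bracket for each relative Rota-Baxter operator. -/
def IsLeibnizBracket (br : A →ₗ[R] A →ₗ[R] A) : Prop :=
  ∀ x y z, br x (br y z) = br (br x y) z + br y (br x z)

/-- The pair `(ρL, ρR)` makes `M` a representation of the Leibniz algebra `(A, br)`. The three
operator identities are stated pointwise. -/
structure IsLeibnizRep (br : A →ₗ[R] A →ₗ[R] A) (ρL ρR : A →ₗ[R] M →ₗ[R] M) : Prop where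
  left_bracket : ∀ x y m, ρL (br x y) m = ρL x (ρL y m) - ρL y (ρL x m)
  right_bracket : ∀ x y m, ρR (br x y) m = ρL x (ρR y m) - ρR y (ρL x m)
  right_left : ∀ x y m, ρR y (ρL x m) = -ρR y (ρR x m)

theorem IsLeibnizBracket.bracket_bracket_swap {br : A →ₗ[R] A →ₗ[R] A} (hbr : IsLeibnizBracket br)
    (x y z : A) : br (br x y) z = -br (br y x) z := by
  rw [eq_sub_of_add_eq (hbr x y z).symm, eq_sub_of_add_eq (hbr y x z).symm, neg_sub]

theorem IsLeibnizBracket.isLeibnizRep_adjoint {br : A →ₗ[R] A →ₗ[R] A}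
    (hbr : IsLeibnizBracket br) : IsLeibnizRep br br br.flip where
  left_bracket x y z := eq_sub_of_add_eq (hbr x y z).symm
  right_bracket x y z := eq_sub_of_add_eq' (hbr x z y).symm
  right_left x y z := hbr.bracket_bracket_swap x z y

theorem IsLeibnizRep.comp {brA : A →ₗ[R] A →ₗ[R] A} {brB : B →ₗ[R] B →ₗ[R] B}
    {ρL ρR : A →ₗ[R] M →ₗ[R] M} (hρ : IsLeibnizRep brA ρL ρR) (f : B →ₗ[R] A)
    (hf : ∀ x y, f (brB x y) = brA (f x) (f y)) : IsLeibnizRep brB (ρL ∘ₗ f) (ρR ∘ₗ f) where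
  left_bracket x y m := by simp only [LinearMap.comp_apply, hf, hρ.left_bracket]
  right_bracket x y m := by simp only [LinearMap.comp_apply, hf, hρ.right_bracket]
  right_left x y m := hρ.right_left (f x) (f y) m

theorem IsLeibnizRep.of_surjective {br : A →ₗ[R] A →ₗ[R] A} {ρL ρR : A →ₗ[R] M →ₗ[R] M}
    (hρ : IsLeibnizRep br ρL ρR) {σL σR : A →ₗ[R] N →ₗ[R] N} (p : M →ₗ[R] N)
    (hp : Function.Surjective p) (hL : ∀ x m, σL x (p m) = p (ρL x m))
    (hR : ∀ x m, σR x (p m) = p (ρR x m)) : IsLeibnizRep br σL σR where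
  left_bracket x y := hp.forall.2 fun m ↦ by simp only [hL, hρ.left_bracket, map_sub]
  right_bracket x y := hp.forall.2 fun m ↦ by simp only [hL, hR, hρ.right_bracket, map_sub]
  right_left x y := hp.forall.2 fun m ↦ by simp only [hL, hR, hρ.right_left, map_neg]

end Representation

section RotaBaxter

variable {R g V : Type*} [CommRing R] [AddCommGroup g] [Module R g] [AddCommGroup V] [Module R V]
  {br : g →ₗ[R] g →ₗ[R] g} {ρL ρR : g →ₗ[R] V →ₗ[R] V} {T : V →ₗ[R] g}

/-- The bracket `[(x, u), (y, v)] = ([x, y], ρL x v + ρR y u)` on the semidirect product of a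
Leibniz algebra `g` with its representation `V`. -/
def semidirectBracket (br : g →ₗ[R] g →ₗ[R] g) (ρL ρR : g →ₗ[R] V →ₗ[R] V) :
    g × V →ₗ[R] g × V →ₗ[R] g × V :=
  LinearMap.mk₂ R (fun a b ↦ (br a.1 b.1, ρL a.1 b.2 + ρR b.1 a.2))
    (fun a b c ↦ by ext <;> simp [add_add_add_comm])
    (fun r a b ↦ by ext <;> simp)
    (fun a b c ↦ by ext <;> simp [add_add_add_comm])
    (fun r a b ↦ by ext <;> simp)

@[simp]
theorem semidirectBracket_apply (a b : g × V) :
    semidirectBracket br ρL ρR a b = (br a.1 b.1, ρL a.1 b.2 + ρR b.1 a.2) :=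
  rfl

theorem IsLeibnizRep.isLeibnizBracket_semidirectBracket (hρ : IsLeibnizRep br ρL ρR)
    (hbr : IsLeibnizBracket br) : IsLeibnizBracket (semidirectBracket br ρL ρR) := by
  rintro ⟨x, u⟩ ⟨y, v⟩ ⟨z, w⟩
  ext
  · exact hbr x y z
  · simp only [semidirectBracket_apply, Prod.snd_add, map_add, hρ.left_bracket, hρ.right_bracket,
      hρ.right_left]
    abel

/-- `T : V → g` is a relative Rota-Baxter operator with respect to `(V; ρL, ρR)`. -/
def IsRelativeRotaBaxter (br : g →ₗ[R] g →ₗ[R] g) (ρL ρR : g →ₗ[R] V →ₗ[R] V)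
    (T : V →ₗ[R] g) : Prop :=
  ∀ u v, br (T u) (T v) = T (ρL (T u) v + ρR (T v) u)

/-- The bracket `[u, v]_T = ρL (T u) v + ρR (T v) u` on `V`. -/
def inducedBracket (ρL ρR : g →ₗ[R] V →ₗ[R] V) (T : V →ₗ[R] g) : V →ₗ[R] V →ₗ[R] V :=
  ρL ∘ₗ T + (ρR ∘ₗ T).flip

/-- The left action `ρ̄L u x = [T u, x] - T (ρR x u)` of `V` on `g`. -/
def inducedLeft (br : g →ₗ[R] g →ₗ[R] g) (ρR : g →ₗ[R] V →ₗ[R] V) (T : V →ₗ[R] g) :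
    V →ₗ[R] g →ₗ[R] g :=
  br ∘ₗ T - ρR.flip.compr₂ T

/-- The right action `ρ̄R u x = [x, T u] - T (ρL x u)` of `V` on `g`. -/
def inducedRight (br : g →ₗ[R] g →ₗ[R] g) (ρL : g →ₗ[R] V →ₗ[R] V) (T : V →ₗ[R] g) :
    V →ₗ[R] g →ₗ[R] g :=
  br.flip ∘ₗ T - ρL.flip.compr₂ T

@[simp]
theorem inducedBracket_apply (u v : V) :
    inducedBracket ρL ρR T u v = ρL (T u) v + ρR (T v) u :=
  rfl

@[simp]
theorem inducedLeft_apply (u : V) (x : g) : inducedLeft br ρR T u x = br (T u) x - T (ρR x u) :=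
  rfl

@[simp]
theorem inducedRight_apply (u : V) (x : g) : inducedRight br ρL T u x = br x (T u) - T (ρL x u) :=
  rfl

/-- The inclusion `u ↦ (T u, u)` of `V` into `g × V`, whose range is the graph of `T`. -/
def graphInclusion (T : V →ₗ[R] g) : V →ₗ[R] g × V :=
  T.prod LinearMap.id

@[simp]
theorem graphInclusion_apply (u : V) : graphInclusion T u = (T u, u) :=
  rfl

/-- The projection `(x, u) ↦ x - T u`, which identifies the quotient of `g × V` by the graph
`{(T u, u)}` of `T` with `g`. -/
def graphProj (T : V →ₗ[R] g) : g × V →ₗ[R] g :=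
  LinearMap.fst R g V - T ∘ₗ LinearMap.snd R g V

@[simp]
theorem graphProj_apply (a : g × V) : graphProj T a = a.1 - T a.2 :=
  rfl

theorem graphProj_surjective (T : V →ₗ[R] g) : Function.Surjective (graphProj T) :=
  fun x ↦ ⟨(x, 0), by simp⟩

namespace IsRelativeRotaBaxter

theorem graphInclusion_inducedBracket (hT : IsRelativeRotaBaxter br ρL ρR T) (u v : V) :
    graphInclusion T (inducedBracket ρL ρR T u v) =
      semidirectBracket br ρL ρR (graphInclusion T u) (graphInclusion T v) :=
  Prod.ext (hT u v).symm rfl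

theorem inducedLeft_graphProj (hT : IsRelativeRotaBaxter br ρL ρR T) (u : V) (a : g × V) :
    inducedLeft br ρR T u (graphProj T a) =
      graphProj T (semidirectBracket br ρL ρR (graphInclusion T u) a) := by
  simp only [graphProj_apply, graphInclusion_apply, semidirectBracket_apply, inducedLeft_apply,
    map_sub, map_add, hT u a.2]
  abel

theorem inducedRight_graphProj (hT : IsRelativeRotaBaxter br ρL ρR T) (u : V) (a : g × V) :
    inducedRight br ρL T u (graphProj T a) =
      graphProj T (semidirectBracket br ρL ρR a (graphInclusion T u)) := by
  simp only [graphProj_apply, graphInclusion_apply, semidirectBracket_apply, inducedRight_apply,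
    map_sub, map_add, hT a.2 u]
  abel

end IsRelativeRotaBaxter

theorem induced_representation_of_relative_rota_baxter_general (hbr : IsLeibnizBracket br)
    (hρ : IsLeibnizRep br ρL ρR) (hT : IsRelativeRotaBaxter br ρL ρR T) :
    IsLeibnizRep (inducedBracket ρL ρR T) (inducedLeft br ρR T) (inducedRight br ρL T) :=
  have hadj := (hρ.isLeibnizBracket_semidirectBracket hbr).isLeibnizRep_adjoint
  have hgraph := hadj.comp (graphInclusion T) hT.graphInclusion_inducedBracket
  hgraph.of_surjective (graphProj T) (graphProj_surjective T) hT.inducedLeft_graphProj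
    hT.inducedRight_graphProj

end RotaBaxter

/-- For a relative Rota-Baxter operator `T`, the maps
`ρ̄L(u)x = [Tu,x]_g − T(ρR(x)u)` and `ρ̄R(u)x = [x,Tu]_g − T(ρL(x)u)` make `g` a
representation of the Leibniz algebra `(V,[·,·]_T)`. -/
theorem induced_representation_of_relative_rota_baxter
    {K : Type*} [Field K] [CharZero K]
    {g V : Type*} [AddCommGroup g] [Module K g] [AddCommGroup V] [Module K V]
    (br : g →ₗ[K] g →ₗ[K] g)
    (leib : ∀ x y z : g, br x (br y z) = br (br x y) z + br y (br x z))
    (ρL ρR : g →ₗ[K] Module.End K V)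
    (hL : ∀ x y : g, ρL (br x y) = ρL x * ρL y - ρL y * ρL x)
    (hR : ∀ x y : g, ρR (br x y) = ρL x * ρR y - ρR y * ρL x)
    (hRL : ∀ x y : g, ρR y * ρL x = -(ρR y * ρR x))
    (T : V →ₗ[K] g)
    (hT : ∀ u v : V, br (T u) (T v) = T (ρL (T u) v + ρR (T v) u))
    (bT : V → V → V)
    (hbT : ∀ u v : V, bT u v = ρL (T u) v + ρR (T v) u)
    (bL bR : V → g → g)
    (hbL : ∀ (u : V) (x : g), bL u x = br (T u) x - T (ρR x u))
    (hbR : ∀ (u : V) (x : g), bR u x = br x (T u) - T (ρL x u)) :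
    (∀ (u v : V) (x : g), bL (bT u v) x = bL u (bL v x) - bL v (bL u x)) ∧
    (∀ (u v : V) (x : g), bR (bT u v) x = bL u (bR v x) - bR v (bL u x)) ∧
    (∀ (u v : V) (x : g), bR u (bL v x) = -(bR u (bR v x))) := by
  obtain rfl : bT = fun u v ↦ inducedBracket ρL ρR T u v := funext₂ hbT
  obtain rfl : bL = fun u x ↦ inducedLeft br ρR T u x := funext₂ hbL
  obtain rfl : bR = fun u x ↦ inducedRight br ρL T u x := funext₂ hbR
  have hρ : IsLeibnizRep br ρL ρR :=
    ⟨fun x y ↦ LinearMap.congr_fun (hL x y), fun x y ↦ LinearMap.congr_fun (hR x y),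
      fun x y ↦ LinearMap.congr_fun (hRL x y)⟩
  have h := induced_representation_of_relative_rota_baxter_general leib hρ hT
  exact ⟨h.left_bracket, h.right_bracket, fun u v ↦ h.right_left v u⟩
end

section
/- Let T be a relative Rota-Baxter operator on a Leibniz algebra (g,[·,·]_g) with respect to a representation (V; ρL, ρR), and let 𝔗₁, 𝔗₂ : V → g be linear maps such that T + t𝔗₁ and T + t𝔗₂ are relative Rota-Baxter operators for every t ∈ K. If these two linear deformations are equivalent, i.e. there exists x ∈ g such that for every t ∈ K the pair (Id_g + tL_x, Id_V + tρL(x)) is a homomorphism from T + t𝔗₂ to T + t𝔗₁, then 𝔗₂ − 𝔗₁ = ∂_T x; that is, (𝔗₂ − 𝔗₁)(u) = T(ρL(x)u) − [x,Tu]_g for all u ∈ V, so 𝔗₁ and 𝔗₂ define the same first cohomology class of T. -/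
/-!
Both sides of `(T + t𝔗₁) ∘ (id + tφ) = (id + tψ) ∘ (T + t𝔗₂)` have constant term `T`, so evaluated
at a vector their difference is `ta + t²b`, where `a = 0` says exactly `𝔗₂ - 𝔗₁ = T ∘ φ - ψ ∘ T`.
If it vanishes at `t = 1` and at some `t = c`, then `c²(a + b) - (ca + c²b) = c(c - 1)a` gives
`a = 0` as soon as `c(c - 1)` is regular. The coboundary formula is the case `φ = ρL(x)`, `ψ = L_x`.
-/

section LinearDeformation

variable {R M : Type*} [CommRing R] [AddCommGroup M] [Module R M]

theorem eq_zero_of_forall_smul_add_sq_smul_eq_zero {c : R} (hc : IsSMulRegular M (c * (c - 1)))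
    {a b : M} (h : ∀ t : R, t • a + t ^ 2 • b = 0) : a = 0 := by
  have h_one : a + b = 0 := by simpa using h 1
  refine hc.right_eq_zero_of_smul ?_
  calc (c * (c - 1)) • a = c ^ 2 • (a + b) - (c • a + c ^ 2 • b) := by module
    _ = 0 := by rw [h_one, h c, smul_zero, sub_zero]

variable {V : Type*} [AddCommGroup V] [Module R V]

theorem intertwining_sub_eq_smul_add_sq_smul (T 𝔗₁ 𝔗₂ : V →ₗ[R] M) (φ : V →ₗ[R] V)
    (ψ : M →ₗ[R] M) (t : R) (u : V) :
    (LinearMap.id + t • ψ : M →ₗ[R] M) ((T + t • 𝔗₂) u) -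
        (T + t • 𝔗₁) ((LinearMap.id + t • φ : V →ₗ[R] V) u) =
      t • ((𝔗₂ u - 𝔗₁ u) - (T (φ u) - ψ (T u))) + t ^ 2 • (ψ (𝔗₂ u) - 𝔗₁ (φ u)) := by
  simp only [LinearMap.add_apply, LinearMap.smul_apply, LinearMap.id_apply, map_add, map_smul]
  module

theorem equivalent_linear_deformations_cohomologous_general {c : R}
    (hc : IsSMulRegular M (c * (c - 1))) {T 𝔗₁ 𝔗₂ : V →ₗ[R] M} {φ : V →ₗ[R] V} {ψ : M →ₗ[R] M}
    (h : ∀ (t : R) (u : V), (T + t • 𝔗₁) ((LinearMap.id + t • φ : V →ₗ[R] V) u) =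
      (LinearMap.id + t • ψ : M →ₗ[R] M) ((T + t • 𝔗₂) u)) (u : V) :
    𝔗₂ u - 𝔗₁ u = T (φ u) - ψ (T u) := by
  refine sub_eq_zero.mp (eq_zero_of_forall_smul_add_sq_smul_eq_zero hc
    (b := ψ (𝔗₂ u) - 𝔗₁ (φ u)) fun t => ?_)
  rw [← intertwining_sub_eq_smul_add_sq_smul, h t u, sub_self]

end LinearDeformation

/-- If two linear deformations `T + t𝔗₁` and `T + t𝔗₂` are equivalent via
`(Id + tL_x, Id + tρL(x))`, then `𝔗₂ − 𝔗₁ = ∂_T x`, so `𝔗₁` and `𝔗₂` define the same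
first cohomology class. -/
theorem equivalent_linear_deformations_cohomologous
    {K : Type*} [Field K] [CharZero K]
    {g V : Type*} [AddCommGroup g] [Module K g] [AddCommGroup V] [Module K V]
    (br : g →ₗ[K] g →ₗ[K] g)
    (leib : ∀ x y z : g, br x (br y z) = br (br x y) z + br y (br x z))
    (ρL ρR : g →ₗ[K] Module.End K V)
    (hL : ∀ x y : g, ρL (br x y) = ρL x * ρL y - ρL y * ρL x)
    (hR : ∀ x y : g, ρR (br x y) = ρL x * ρR y - ρR y * ρL x)
    (hRL : ∀ x y : g, ρR y * ρL x = -(ρR y * ρR x))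
    (T : V →ₗ[K] g)
    (hT : ∀ u v : V, br (T u) (T v) = T (ρL (T u) v + ρR (T v) u))
    (𝔗₁ 𝔗₂ : V →ₗ[K] g)
    (hdef₁ : ∀ t : K, ∀ u v : V,
        br ((T + t • 𝔗₁) u) ((T + t • 𝔗₁) v) =
          (T + t • 𝔗₁) (ρL ((T + t • 𝔗₁) u) v + ρR ((T + t • 𝔗₁) v) u))
    (hdef₂ : ∀ t : K, ∀ u v : V,
        br ((T + t • 𝔗₂) u) ((T + t • 𝔗₂) v) =
          (T + t • 𝔗₂) (ρL ((T + t • 𝔗₂) u) v + ρR ((T + t • 𝔗₂) v) u))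
    (x : g)
    (hhom_alg : ∀ t : K, ∀ y z : g,
        ((LinearMap.id + t • br x : g →ₗ[K] g)) (br y z) =
          br (((LinearMap.id + t • br x : g →ₗ[K] g)) y) (((LinearMap.id + t • br x : g →ₗ[K] g)) z))
    (hhom_comm : ∀ t : K, ∀ u : V,
        (T + t • 𝔗₁) (((LinearMap.id + t • ρL x : V →ₗ[K] V)) u) =
          ((LinearMap.id + t • br x : g →ₗ[K] g)) ((T + t • 𝔗₂) u))
    (hhom_L : ∀ t : K, ∀ (y : g) (u : V),
        ((LinearMap.id + t • ρL x : V →ₗ[K] V)) (ρL y u) =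
          ρL (((LinearMap.id + t • br x : g →ₗ[K] g)) y) (((LinearMap.id + t • ρL x : V →ₗ[K] V)) u))
    (hhom_R : ∀ t : K, ∀ (y : g) (u : V),
        ((LinearMap.id + t • ρL x : V →ₗ[K] V)) (ρR y u) =
          ρR (((LinearMap.id + t • br x : g →ₗ[K] g)) y) (((LinearMap.id + t • ρL x : V →ₗ[K] V)) u)) :
    ∀ u : V, 𝔗₂ u - 𝔗₁ u = T (ρL x u) - br x (T u) := by
  have two_regular : IsSMulRegular g ((2 : K) * (2 - 1)) := .of_ne_zero (by norm_num)
  exact equivalent_linear_deformations_cohomologous_general two_regular hhom_comm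
end

section
/- Let T be a relative Rota-Baxter operator on a Leibniz algebra (g,[·,·]_g) with respect to a representation (V; ρL, ρR), and let x ∈ g be a Nijenhuis element associated to T. Define 𝔗 := ∂_T x, i.e. 𝔗(u) = T(ρL(x)u) − [x,Tu]_g. Then T_t = T + t𝔗 is a relative Rota-Baxter operator for every t ∈ K, and this linear deformation is trivial: for every t ∈ K the pair (Id_g + tL_x, Id_V + tρL(x)) is a homomorphism from T_t to T. -/
/-!
The pair `(D, δ) = (L_x, ρL x)` is a derivation of the bracket together with its two actions, and
`𝔗 = T ∘ δ - D ∘ T` measures its failure to commute with `T`. The derivation property makes the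
part of the Rota-Baxter identity for `T + t𝔗` that is linear in `t` automatic, so only the quadratic
part remains, namely the Rota-Baxter identity for `𝔗` itself. Applying `D` to the linear part and
using the Nijenhuis conditions, in particular `D ∘ 𝔗 = 0`, turns that identity into the Rota-Baxter
identity of `T` at `(δ u, δ v)`.
-/

section RelativeRotaBaxter

variable {K g V : Type*} [CommRing K] [AddCommGroup g] [Module K g] [AddCommGroup V] [Module K V]
  {br : g →ₗ[K] g →ₗ[K] g} {ρL ρR : g →ₗ[K] Module.End K V}
  {T S : V →ₗ[K] g} {D : Module.End K g} {δ : Module.End K V}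

/-- `T` is a relative Rota-Baxter operator for the bracket `br` and the left and right actions
`ρL`, `ρR`. -/
def IsRelRotaBaxter (br : g →ₗ[K] g →ₗ[K] g) (ρL ρR : g →ₗ[K] Module.End K V)
    (T : V →ₗ[K] g) : Prop :=
  ∀ u v, br (T u) (T v) = T (ρL (T u) v + ρR (T v) u)

/-- `(φ, ψ)` is a homomorphism from the relative Rota-Baxter operator `T'` to `T`. -/
structure IsRelRotaBaxterHom (br : g →ₗ[K] g →ₗ[K] g) (ρL ρR : g →ₗ[K] Module.End K V)
    (T' T : V →ₗ[K] g) (φ : Module.End K g) (ψ : Module.End K V) : Prop where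
  map_bracket : ∀ y z, φ (br y z) = br (φ y) (φ z)
  intertwines : ∀ u, T (ψ u) = φ (T' u)
  map_left : ∀ y u, ψ (ρL y u) = ρL (φ y) (ψ u)
  map_right : ∀ y u, ψ (ρR y u) = ρR (φ y) (ψ u)

/-- `(D, δ)` is a derivation of the bracket `br` together with its two actions on `V`. The inner
derivations of a Leibniz algebra with a representation are the pairs `(L_x, ρL x)`. -/
structure IsDerivationPair (br : g →ₗ[K] g →ₗ[K] g) (ρL ρR : g →ₗ[K] Module.End K V)
    (D : Module.End K g) (δ : Module.End K V) : Prop where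
  map_bracket : ∀ y z, D (br y z) = br (D y) z + br y (D z)
  left_map : ∀ y, ρL (D y) = δ * ρL y - ρL y * δ
  right_map : ∀ y, ρR (D y) = δ * ρR y - ρR y * δ

/-- The coboundary of the pair `(D, δ)` along `T`. For `(D, δ) = (L_x, ρL x)` it is `∂_T x`. -/
def rotaBaxterCoboundary (T : V →ₗ[K] g) (D : Module.End K g) (δ : Module.End K V) : V →ₗ[K] g :=
  T ∘ₗ δ - D ∘ₗ T

/-- The derivation `(D, δ)` satisfies the Nijenhuis conditions with respect to `T`. An element `x`
is a Nijenhuis element associated to `T` when `(L_x, ρL x)` is such a pair. -/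
structure IsNijenhuisPair (br : g →ₗ[K] g →ₗ[K] g) (ρL ρR : g →ₗ[K] Module.End K V)
    (T : V →ₗ[K] g) (D : Module.End K g) (δ : Module.End K V) : Prop
    extends IsDerivationPair br ρL ρR D δ where
  bracket_map_map : ∀ y z, br (D y) (D z) = 0
  left_map_mul : ∀ y, ρL (D y) * δ = 0
  right_map_mul : ∀ y, ρR (D y) * δ = 0
  map_coboundary : ∀ u, D (rotaBaxterCoboundary T D δ u) = 0

theorem rotaBaxterCoboundary_apply (T : V →ₗ[K] g) (D : Module.End K g) (δ : Module.End K V)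
    (u : V) : rotaBaxterCoboundary T D δ u = T (δ u) - D (T u) :=
  rfl

theorem IsRelRotaBaxter.add_smul (hT : IsRelRotaBaxter br ρL ρR T) (hS : IsRelRotaBaxter br ρL ρR S)
    (hTS : ∀ u v, br (T u) (S v) + br (S u) (T v) =
      T (ρL (S u) v + ρR (S v) u) + S (ρL (T u) v + ρR (T v) u)) (t : K) :
    IsRelRotaBaxter br ρL ρR (T + t • S) := by
  intro u v
  have hT' := hT u v
  have hS' := hS u v
  have hTS' := hTS u v
  simp only [map_add] at hT' hS' hTS'
  simp only [LinearMap.add_apply, LinearMap.smul_apply, map_add, map_smul]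
  linear_combination (norm := module) hT' + t • hTS' + t ^ 2 • hS'

namespace IsDerivationPair

theorem map_left (h : IsDerivationPair br ρL ρR D δ) (y : g) (v : V) :
    δ (ρL y v) = ρL (D y) v + ρL y (δ v) := by
  simp [h.left_map]

theorem map_right (h : IsDerivationPair br ρL ρR D δ) (y : g) (v : V) :
    δ (ρR y v) = ρR (D y) v + ρR y (δ v) := by
  simp [h.right_map]

theorem coboundary_isCocycle (h : IsDerivationPair br ρL ρR D δ) (hT : IsRelRotaBaxter br ρL ρR T)
    (u v : V) :
    br (T u) (rotaBaxterCoboundary T D δ v) + br (rotaBaxterCoboundary T D δ u) (T v) =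
      T (ρL (rotaBaxterCoboundary T D δ u) v + ρR (rotaBaxterCoboundary T D δ v) u) +
        rotaBaxterCoboundary T D δ (ρL (T u) v + ρR (T v) u) := by
  have hD : D (T (ρL (T u) v)) + D (T (ρR (T v) u)) = br (D (T u)) (T v) + br (T u) (D (T v)) := by
    rw [← map_add, ← map_add, ← hT u v, h.map_bracket]
  simp only [rotaBaxterCoboundary_apply, map_add, map_sub, LinearMap.sub_apply,
    hT _ _, h.map_left, h.map_right]
  linear_combination (norm := abel) hD

end IsDerivationPair

namespace IsNijenhuisPair

theorem left_map_apply (h : IsNijenhuisPair br ρL ρR T D δ) (y : g) (v : V) :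
    ρL (D y) (δ v) = 0 :=
  LinearMap.congr_fun (h.left_map_mul y) v

theorem right_map_apply (h : IsNijenhuisPair br ρL ρR T D δ) (y : g) (v : V) :
    ρR (D y) (δ v) = 0 :=
  LinearMap.congr_fun (h.right_map_mul y) v

theorem isRelRotaBaxter_coboundary (h : IsNijenhuisPair br ρL ρR T D δ)
    (hT : IsRelRotaBaxter br ρL ρR T) :
    IsRelRotaBaxter br ρL ρR (rotaBaxterCoboundary T D δ) := by
  intro u v
  set 𝔗 := rotaBaxterCoboundary T D δ
  have h𝔗 (w : V) : 𝔗 w = T (δ w) - D (T w) := rfl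
  have hD𝔗 (w : V) : D (𝔗 w) = 0 := h.map_coboundary w
  have hδL : δ (ρL (𝔗 u) v) = ρL (T (δ u)) (δ v) := by
    rw [h.map_left, hD𝔗, h𝔗]
    simp [h.left_map_apply]
  have hδR : δ (ρR (𝔗 v) u) = ρR (T (δ v)) (δ u) := by
    rw [h.map_right, hD𝔗, h𝔗]
    simp [h.right_map_apply]
  have hδ : T (δ (ρL (𝔗 u) v + ρR (𝔗 v) u)) = br (T (δ u)) (T (δ v)) := by
    rw [map_add, hδL, hδR, hT]
  have hD : D (T (ρL (𝔗 u) v + ρR (𝔗 v) u)) = br (D (T u)) (𝔗 v) + br (𝔗 u) (D (T v)) := by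
    have hcocycle := congrArg D (h.coboundary_isCocycle hT u v)
    simpa only [map_add D, h.map_bracket, h.map_coboundary, map_zero, LinearMap.zero_apply,
      add_zero, zero_add] using hcocycle.symm
  calc br (𝔗 u) (𝔗 v)
      = br (T (δ u)) (T (δ v)) - (br (D (T u)) (𝔗 v) + br (𝔗 u) (D (T v))) := by
        simp only [h𝔗, map_sub, LinearMap.sub_apply, h.bracket_map_map]
        abel
    _ = 𝔗 (ρL (𝔗 u) v + ρR (𝔗 v) u) := by rw [h𝔗 (ρL _ _ + _), hδ, hD]

theorem isRelRotaBaxterHom (h : IsNijenhuisPair br ρL ρR T D δ) (t : K) :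
    IsRelRotaBaxterHom br ρL ρR (T + t • rotaBaxterCoboundary T D δ) T
      (LinearMap.id + t • D) (LinearMap.id + t • δ) where
  map_bracket y z := by
    simp only [LinearMap.add_apply, LinearMap.smul_apply, LinearMap.id_apply, map_add, map_smul,
      h.map_bracket, h.bracket_map_map]
    module
  intertwines u := by
    simp only [LinearMap.add_apply, LinearMap.smul_apply, LinearMap.id_apply, map_add, map_smul,
      h.map_coboundary]
    rw [rotaBaxterCoboundary_apply]
    module
  map_left y u := by
    simp only [LinearMap.add_apply, LinearMap.smul_apply, LinearMap.id_apply, map_add, map_smul,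
      h.map_left, h.left_map_apply]
    module
  map_right y u := by
    simp only [LinearMap.add_apply, LinearMap.smul_apply, LinearMap.id_apply, map_add, map_smul,
      h.map_right, h.right_map_apply]
    module

end IsNijenhuisPair

end RelativeRotaBaxter

theorem nijenhuis_element_gives_trivial_linear_deformation_general
    {K : Type*} [CommRing K]
    {g V : Type*} [AddCommGroup g] [Module K g] [AddCommGroup V] [Module K V]
    {br : g →ₗ[K] g →ₗ[K] g} {ρL ρR : g →ₗ[K] Module.End K V} {T : V →ₗ[K] g}
    {D : Module.End K g} {δ : Module.End K V}
    (hT : IsRelRotaBaxter br ρL ρR T) (h : IsNijenhuisPair br ρL ρR T D δ) (t : K) :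
    IsRelRotaBaxter br ρL ρR (T + t • rotaBaxterCoboundary T D δ) ∧
      IsRelRotaBaxterHom br ρL ρR (T + t • rotaBaxterCoboundary T D δ) T
        (LinearMap.id + t • D) (LinearMap.id + t • δ) :=
  ⟨hT.add_smul (h.isRelRotaBaxter_coboundary hT) (h.coboundary_isCocycle hT) t,
    h.isRelRotaBaxterHom t⟩

/-- For a Nijenhuis element `x` associated to a relative Rota-Baxter operator
`T`, the map `𝔗 = ∂_T x` generates a trivial linear deformation of `T`: `T + t𝔗` is a
relative Rota-Baxter operator for all `t`, and `(Id + tL_x, Id + tρL(x))` is a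
homomorphism from `T + t𝔗` to `T`. -/
theorem nijenhuis_element_gives_trivial_linear_deformation
    {K : Type*} [Field K] [CharZero K]
    {g V : Type*} [AddCommGroup g] [Module K g] [AddCommGroup V] [Module K V]
    (br : g →ₗ[K] g →ₗ[K] g)
    (leib : ∀ x y z : g, br x (br y z) = br (br x y) z + br y (br x z))
    (ρL ρR : g →ₗ[K] Module.End K V)
    (hL : ∀ x y : g, ρL (br x y) = ρL x * ρL y - ρL y * ρL x)
    (hR : ∀ x y : g, ρR (br x y) = ρL x * ρR y - ρR y * ρL x)
    (hRL : ∀ x y : g, ρR y * ρL x = -(ρR y * ρR x))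
    (T : V →ₗ[K] g)
    (hT : ∀ u v : V, br (T u) (T v) = T (ρL (T u) v + ρR (T v) u))
    (x : g)
    (hNij1 : ∀ y z : g, br (br x y) (br x z) = 0)
    (hNij2 : ∀ y : g, ρL (br x y) * ρL x = 0)
    (hNij3 : ∀ y : g, ρR (br x y) * ρL x = 0)
    (hNij4 : ∀ u : V, br x (T (ρL x u) - br x (T u)) = 0)
    (𝔗 : V →ₗ[K] g)
    (h𝔗 : ∀ u : V, 𝔗 u = T (ρL x u) - br x (T u)) :
    (∀ t : K, ∀ u v : V,
        br ((T + t • 𝔗) u) ((T + t • 𝔗) v) =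
          (T + t • 𝔗) (ρL ((T + t • 𝔗) u) v + ρR ((T + t • 𝔗) v) u)) ∧
    (∀ t : K, ∀ y z : g,
        ((LinearMap.id + t • br x : g →ₗ[K] g)) (br y z) =
          br (((LinearMap.id + t • br x : g →ₗ[K] g)) y)
            (((LinearMap.id + t • br x : g →ₗ[K] g)) z)) ∧
    (∀ t : K, ∀ u : V,
        T (((LinearMap.id + t • ρL x : V →ₗ[K] V)) u) =
          ((LinearMap.id + t • br x : g →ₗ[K] g)) ((T + t • 𝔗) u)) ∧
    (∀ t : K, ∀ (y : g) (u : V),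
        ((LinearMap.id + t • ρL x : V →ₗ[K] V)) (ρL y u) =
          ρL (((LinearMap.id + t • br x : g →ₗ[K] g)) y)
            (((LinearMap.id + t • ρL x : V →ₗ[K] V)) u)) ∧
    (∀ t : K, ∀ (y : g) (u : V),
        ((LinearMap.id + t • ρL x : V →ₗ[K] V)) (ρR y u) =
          ρR (((LinearMap.id + t • br x : g →ₗ[K] g)) y)
            (((LinearMap.id + t • ρL x : V →ₗ[K] V)) u)) := by
  obtain rfl : 𝔗 = rotaBaxterCoboundary T (br x) (ρL x) := LinearMap.ext h𝔗
  have h := nijenhuis_element_gives_trivial_linear_deformation_general hT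
    ⟨⟨leib x, hL x, hR x⟩, hNij1, hNij2, hNij3, hNij4⟩
  exact ⟨fun t => (h t).1, fun t => (h t).2.map_bracket, fun t => (h t).2.intertwines,
    fun t => (h t).2.map_left, fun t => (h t).2.map_right⟩
end
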